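/- arXiv:2412.20482 — 5 statements merged into one kernel-verified Lean document; each statement's English description precedes it below -/
import Mathlib

section
/- Let τ be in the upper half-plane and let z ∈ ℂ satisfy θ₁(2z|τ) ≠ 0 (and assume θ₃(0|τ) ≠ 0 and θ₄(0|τ) ≠ 0, which holds for every τ in the upper half-plane). Then the determinant of the matrix Ω(z) equals −θ₂(0|τ)²·θ₁(2z|τ). -/
noncomputable section

open Complex

/-- The theta function `θ_{a,b}(z|τ) = ∑_{k∈ℤ} exp(πiτ(k+a)² + 2πi(k+a)(z+b))`. -/
def thetaAB (a b : ℝ) (z τ : ℂ) : ℂ :=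
  ∑' k : ℤ, Complex.exp ((Real.pi : ℂ) * Complex.I * τ * ((k : ℂ) + (a : ℂ)) ^ 2 +
    2 * (Real.pi : ℂ) * Complex.I * ((k : ℂ) + (a : ℂ)) * (z + (b : ℂ)))

/-- The Jacobi theta function `θ₁(z|τ) = −θ_{1/2,1/2}(z|τ)`. -/
def jth1 (z τ : ℂ) : ℂ := -thetaAB (1/2) (1/2) z τ

/-- The Jacobi theta function `θ₂(z|τ) = θ_{1/2,0}(z|τ)`. -/
def jth2 (z τ : ℂ) : ℂ := thetaAB (1/2) 0 z τ

/-- The Jacobi theta function `θ₃(z|τ) = θ_{0,0}(z|τ)`. -/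
def jth3 (z τ : ℂ) : ℂ := thetaAB 0 0 z τ

/-- The Jacobi theta function `θ₄(z|τ) = θ_{0,1/2}(z|τ)`. -/
def jth4 (z τ : ℂ) : ℂ := thetaAB 0 (1/2) z τ

/-- `ψ₊(z) = (θ₄(0|τ)²/θ₃(0|τ))·(θ₃(2z|τ)/θ₁(2z|τ)) − (θ₃(0|τ)²/θ₄(0|τ))·(θ₄(2z|τ)/θ₁(2z|τ))`. -/
def psiPlus (τ z : ℂ) : ℂ :=
  (jth4 0 τ) ^ 2 / jth3 0 τ * (jth3 (2*z) τ / jth1 (2*z) τ) -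
    (jth3 0 τ) ^ 2 / jth4 0 τ * (jth4 (2*z) τ / jth1 (2*z) τ)

/-- `ψ₋(z) = −(θ₄(0|τ)²/θ₃(0|τ))·(θ₃(2z|τ)/θ₁(2z|τ)) − (θ₃(0|τ)²/θ₄(0|τ))·(θ₄(2z|τ)/θ₁(2z|τ))`. -/
def psiMinus (τ z : ℂ) : ℂ :=
  -((jth4 0 τ) ^ 2 / jth3 0 τ * (jth3 (2*z) τ / jth1 (2*z) τ)) -
    (jth3 0 τ) ^ 2 / jth4 0 τ * (jth4 (2*z) τ / jth1 (2*z) τ)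

/-- `Ω(z) = [[θ₃(2z|2τ), ψ₋(z)θ₂(2z|2τ)], [θ₂(2z|2τ), ψ₊(z)θ₃(2z|2τ)]]`. -/
def OmegaMat (τ z : ℂ) : Matrix (Fin 2) (Fin 2) ℂ :=
  !![jth3 (2*z) (2*τ), psiMinus τ z * jth2 (2*z) (2*τ);
     jth2 (2*z) (2*τ), psiPlus τ z * jth3 (2*z) (2*τ)]

/-- Theta series with characteristic `a`, evaluated at a complex argument. -/
def thF (a : ℂ) (X τ : ℂ) : ℂ :=
  ∑' k : ℤ, Complex.exp ((Real.pi : ℂ) * Complex.I * τ * ((k : ℂ) + a) ^ 2 +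
    2 * (Real.pi : ℂ) * Complex.I * ((k : ℂ) + a) * X)

theorem thF_summable (a X τ : ℂ) (hτ : 0 < τ.im) :
    Summable (fun k : ℤ => Complex.exp ((Real.pi : ℂ) * Complex.I * τ * ((k : ℂ) + a) ^ 2 +
    2 * (Real.pi : ℂ) * Complex.I * ((k : ℂ) + a) * X)) := by
  have h := ((summable_jacobiTheta₂_term_iff (X + a * τ) τ).2 hτ).mul_left
    (Complex.exp ((Real.pi : ℂ) * Complex.I * τ * a ^ 2 + 2 * (Real.pi : ℂ) * Complex.I * a * X))
  refine h.congr fun k => ?_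
  rw [jacobiTheta₂_term, ← Complex.exp_add]
  congr 1
  ring

theorem thF_add_one_left (a X τ : ℂ) : thF (a + 1) X τ = thF a X τ := by
  unfold thF
  rw [← (Equiv.addRight (1 : ℤ)).tsum_eq (fun k : ℤ => Complex.exp
    ((Real.pi : ℂ) * Complex.I * τ * ((k : ℂ) + a) ^ 2 +
    2 * (Real.pi : ℂ) * Complex.I * ((k : ℂ) + a) * X))]
  refine tsum_congr fun k => ?_
  congr 1
  simp only [Equiv.coe_addRight]
  push_cast
  ring

theorem thF_add_one_right (a X τ : ℂ) :
    thF a (X + 1) τ = Complex.exp (2 * (Real.pi : ℂ) * Complex.I * a) * thF a X τ := by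
  unfold thF
  rw [← tsum_mul_left]
  refine tsum_congr fun k => ?_
  have hk := Complex.exp_int_mul_two_pi_mul_I k
  refine Eq.trans ?_ (congrArg (· * _) hk |>.trans (one_mul _))
  simp only [← Complex.exp_add]
  congr 1
  ring

/-- Splitting of pairs of integers by parity of the sum. -/
def parMap : (ℤ × ℤ) ⊕ (ℤ × ℤ) → ℤ × ℤ
  | Sum.inl p => (p.1 + p.2, p.1 - p.2)
  | Sum.inr p => (p.1 + p.2 + 1, p.1 - p.2)

theorem parMap_bij : Function.Bijective parMap := by
  constructor
  · rintro (⟨a, b⟩ | ⟨a, b⟩) (⟨c, d⟩ | ⟨c, d⟩) h <;>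
      simp only [parMap, Prod.mk.injEq, Sum.inl.injEq, Sum.inr.injEq, reduceCtorEq] at h ⊢ <;> omega
  · rintro ⟨m, n⟩
    rcases Int.even_or_odd' (m + n) with ⟨c, h | h⟩
    · exact ⟨Sum.inl (c, m - c), by simp only [parMap, Prod.mk.injEq]; omega⟩
    · exact ⟨Sum.inr (c, m - c - 1), by simp only [parMap, Prod.mk.injEq]; omega⟩

theorem hasSum_mul_aux (f g : ℤ → ℂ) (hf : Summable f) (hg : Summable g) :
    HasSum (fun p : ℤ × ℤ => f p.1 * g p.2) ((∑' k, f k) * ∑' k, g k) :=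
  hf.hasSum.mul hg.hasSum (summable_mul_of_summable_norm hf.norm hg.norm)

theorem thF_hasSum_mul (a b X Y τ σ : ℂ) (hτ : 0 < τ.im) (hσ : 0 < σ.im) :
    HasSum (fun p : ℤ × ℤ => Complex.exp ((Real.pi : ℂ) * Complex.I * τ * ((p.1 : ℂ) + a) ^ 2 +
    2 * (Real.pi : ℂ) * Complex.I * ((p.1 : ℂ) + a) * X) *
    Complex.exp ((Real.pi : ℂ) * Complex.I * σ * ((p.2 : ℂ) + b) ^ 2 +
    2 * (Real.pi : ℂ) * Complex.I * ((p.2 : ℂ) + b) * Y)) (thF a X τ * thF b Y σ) := by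
  exact hasSum_mul_aux _ _ (thF_summable a X τ hτ) (thF_summable b Y σ hσ)

theorem thF_mul (a X Y τ : ℂ) (hτ : 0 < τ.im) :
    thF a X τ * thF a Y τ = thF a (X + Y) (2 * τ) * thF 0 (X - Y) (2 * τ) +
      thF (a + 1 / 2) (X + Y) (2 * τ) * thF (1 / 2) (X - Y) (2 * τ) := by
  have h2 : 0 < (2 * τ).im := by simpa using hτ
  have hL := (Equiv.ofBijective parMap parMap_bij).hasSum_iff.2 (thF_hasSum_mul a a X Y τ τ hτ hτ)
  refine hL.unique (HasSum.sum ?_ ?_)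
  · convert thF_hasSum_mul a 0 (X + Y) (X - Y) _ _ h2 h2 using 2 with p
    simp only [Function.comp, Equiv.ofBijective_apply, parMap]
    rw [← Complex.exp_add, ← Complex.exp_add]
    congr 1
    push_cast
    ring
  · convert thF_hasSum_mul (a + 1 / 2) (1 / 2) (X + Y) (X - Y) _ _ h2 h2 using 2 with p
    simp only [Function.comp, Equiv.ofBijective_apply, parMap]
    rw [← Complex.exp_add, ← Complex.exp_add]
    congr 1
    push_cast
    ring

theorem thF_zero_add_one (X τ : ℂ) : thF 0 (X + 1) τ = thF 0 X τ := by
  rw [thF_add_one_right]; simp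

theorem thF_half_add_one (X τ : ℂ) : thF (1 / 2) (X + 1) τ = -thF (1 / 2) X τ := by
  rw [thF_add_one_right,
    show 2 * (Real.pi : ℂ) * Complex.I * (1 / 2) = (Real.pi : ℂ) * Complex.I by ring,
    Complex.exp_pi_mul_I]
  ring

theorem jth1_eq (z τ : ℂ) : jth1 z τ = -thF (1 / 2) (z + 1 / 2) τ := by
  simp [jth1, thetaAB, thF]

theorem jth2_eq (z τ : ℂ) : jth2 z τ = thF (1 / 2) z τ := by
  simp [jth2, thetaAB, thF]

theorem jth3_eq (z τ : ℂ) : jth3 z τ = thF 0 z τ := by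
  simp [jth3, thetaAB, thF]

theorem jth4_eq (z τ : ℂ) : jth4 z τ = thF 0 (z + 1 / 2) τ := by
  simp [jth4, thetaAB, thF]

theorem th_rel3 (w τ : ℂ) (hτ : 0 < τ.im) :
    jth3 w τ * jth3 0 τ = jth3 w (2 * τ) ^ 2 + jth2 w (2 * τ) ^ 2 := by
  simp only [jth3_eq, jth2_eq]
  rw [thF_mul _ _ _ _ hτ]
  simp only [add_zero, sub_zero, zero_add]
  ring

theorem th_rel4 (w τ : ℂ) (hτ : 0 < τ.im) :
    jth4 w τ * jth4 0 τ = jth3 w (2 * τ) ^ 2 - jth2 w (2 * τ) ^ 2 := by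
  simp only [jth3_eq, jth2_eq, jth4_eq]
  rw [thF_mul _ _ _ _ hτ, show w + 1 / 2 + (0 + 1 / 2) = w + 1 by ring,
    show w + 1 / 2 - (0 + 1 / 2) = w by ring, zero_add, thF_zero_add_one, thF_half_add_one]
  ring

theorem th_sq3 (w τ : ℂ) (hτ : 0 < τ.im) :
    jth3 w τ ^ 2 = thF 0 (2 * w) (2 * τ) * thF 0 0 (2 * τ) +
      thF (1 / 2) (2 * w) (2 * τ) * thF (1 / 2) 0 (2 * τ) := by
  rw [jth3_eq, sq, thF_mul _ _ _ _ hτ, zero_add, sub_self, ← two_mul]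

theorem th_sq4 (w τ : ℂ) (hτ : 0 < τ.im) :
    jth4 w τ ^ 2 = thF 0 (2 * w) (2 * τ) * thF 0 0 (2 * τ) -
      thF (1 / 2) (2 * w) (2 * τ) * thF (1 / 2) 0 (2 * τ) := by
  rw [jth4_eq, sq, thF_mul _ _ _ _ hτ, zero_add, sub_self,
    show w + 1 / 2 + (w + 1 / 2) = 2 * w + 1 by ring, thF_zero_add_one, thF_half_add_one]
  ring

theorem th_sq2 (τ : ℂ) (hτ : 0 < τ.im) :
    jth2 0 τ ^ 2 = 2 * thF 0 0 (2 * τ) * thF (1 / 2) 0 (2 * τ) := by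
  rw [jth2_eq, sq, thF_mul _ _ _ _ hτ, show (1 / 2 + 1 / 2 : ℂ) = 0 + 1 by ring,
    thF_add_one_left, sub_self, add_zero]
  ring

theorem th_sq1 (w τ : ℂ) (hτ : 0 < τ.im) :
    jth1 w τ ^ 2 = thF 0 (2 * w) (2 * τ) * thF (1 / 2) 0 (2 * τ) -
      thF (1 / 2) (2 * w) (2 * τ) * thF 0 0 (2 * τ) := by
  rw [jth1_eq, neg_sq, sq, thF_mul _ _ _ _ hτ, show (1 / 2 + 1 / 2 : ℂ) = 0 + 1 by ring,
    thF_add_one_left, sub_self, show w + 1 / 2 + (w + 1 / 2) = 2 * w + 1 by ring,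
    thF_zero_add_one, thF_half_add_one]
  ring

theorem th_quartic (w τ : ℂ) (hτ : 0 < τ.im) :
    jth4 0 τ ^ 2 * jth3 w τ ^ 2 - jth3 0 τ ^ 2 * jth4 w τ ^ 2 =
      -(jth2 0 τ ^ 2 * jth1 w τ ^ 2) := by
  rw [th_sq4 0 τ hτ, th_sq3 0 τ hτ, th_sq3 w τ hτ, th_sq4 w τ hτ, th_sq2 τ hτ, th_sq1 w τ hτ,
    mul_zero]
  ring

/-- for `τ` in the upper half-plane and `z ∈ ℂ` with `θ₁(2z|τ) ≠ 0`,
`θ₃(0|τ) ≠ 0`, `θ₄(0|τ) ≠ 0`, the determinant of `Ω(z)` equals `−θ₂(0|τ)²·θ₁(2z|τ)`. -/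
theorem det_OmegaMat (τ z : ℂ) (hτ : 0 < τ.im)
    (h1 : jth1 (2*z) τ ≠ 0) (h3 : jth3 0 τ ≠ 0) (h4 : jth4 0 τ ≠ 0) :
    (OmegaMat τ z).det = -((jth2 0 τ) ^ 2 * jth1 (2*z) τ) := by
  have r3 := th_rel3 (2 * z) τ hτ
  have r4 := th_rel4 (2 * z) τ hτ
  have q := th_quartic (2 * z) τ hτ
  have hdet : (OmegaMat τ z).det =
      (jth4 0 τ) ^ 2 / jth3 0 τ * (jth3 (2*z) τ / jth1 (2*z) τ) *
        (jth3 (2*z) (2*τ) ^ 2 + jth2 (2*z) (2*τ) ^ 2) -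
      (jth3 0 τ) ^ 2 / jth4 0 τ * (jth4 (2*z) τ / jth1 (2*z) τ) *
        (jth3 (2*z) (2*τ) ^ 2 - jth2 (2*z) (2*τ) ^ 2) := by
    rw [OmegaMat, Matrix.det_fin_two_of, psiPlus, psiMinus]
    ring
  rw [hdet, ← r3, ← r4]
  have e : (jth4 0 τ) ^ 2 / jth3 0 τ * (jth3 (2*z) τ / jth1 (2*z) τ) *
        (jth3 (2*z) τ * jth3 0 τ) -
      (jth3 0 τ) ^ 2 / jth4 0 τ * (jth4 (2*z) τ / jth1 (2*z) τ) *
        (jth4 (2*z) τ * jth4 0 τ) =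
      (jth4 0 τ ^ 2 * jth3 (2*z) τ ^ 2 - jth3 0 τ ^ 2 * jth4 (2*z) τ ^ 2) / jth1 (2*z) τ := by
    field_simp
  rw [e, q]
  field_simp
end
end

section
/- Let τ be in the upper half-plane and let z ∈ ℂ satisfy θ₁(2z|τ) ≠ 0 (and assume θ₃(0|τ) ≠ 0 and θ₄(0|τ) ≠ 0). Then Ω(z + 1/2) = T₁·Ω(z), where T₁ = [[1,0],[0,−1]]. -/
noncomputable section

open Complex

theorem thetaAB_add_one (a b : ℝ) (z τ : ℂ) :
    thetaAB a b (z + 1) τ = Complex.exp (2 * (Real.pi : ℂ) * Complex.I * (a : ℂ)) * thetaAB a b z τ := by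
  unfold thetaAB
  rw [← tsum_mul_left]
  refine tsum_congr fun k => ?_
  rw [← Complex.exp_add, Complex.exp_eq_exp_iff_exists_int]
  exact ⟨k, by ring⟩

theorem exp_half_aux :
    Complex.exp (2 * (Real.pi : ℂ) * Complex.I * (((1/2 : ℝ)) : ℂ)) = -1 := by
  rw [← Complex.exp_pi_mul_I]
  congr 1
  push_cast
  ring

theorem jth1_add_one (z τ : ℂ) : jth1 (z + 1) τ = -jth1 z τ := by
  unfold jth1
  rw [thetaAB_add_one, exp_half_aux]
  ring

theorem jth2_add_one (z τ : ℂ) : jth2 (z + 1) τ = -jth2 z τ := by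
  unfold jth2
  rw [thetaAB_add_one, exp_half_aux]
  ring

theorem jth3_add_one (z τ : ℂ) : jth3 (z + 1) τ = jth3 z τ := by
  unfold jth3
  rw [thetaAB_add_one]
  simp

theorem jth4_add_one (z τ : ℂ) : jth4 (z + 1) τ = jth4 z τ := by
  unfold jth4
  rw [thetaAB_add_one]
  simp

/-- `Ω(z + 1/2) = T₁·Ω(z)` with `T₁ = [[1,0],[0,−1]]`. -/
theorem OmegaMat_half_translation (τ z : ℂ) (hτ : 0 < τ.im)
    (h1 : jth1 (2*z) τ ≠ 0) (h3 : jth3 0 τ ≠ 0) (h4 : jth4 0 τ ≠ 0) :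
    OmegaMat τ (z + 1/2) = !![(1 : ℂ), 0; 0, -1] * OmegaMat τ z := by
  have hz : 2 * (z + 1/2) = 2 * z + 1 := by ring
  have hm : psiMinus τ (z + 1/2) = -psiMinus τ z := by
    unfold psiMinus
    rw [hz, jth1_add_one, jth3_add_one, jth4_add_one, div_neg, div_neg]
    ring
  have hp : psiPlus τ (z + 1/2) = -psiPlus τ z := by
    unfold psiPlus
    rw [hz, jth1_add_one, jth3_add_one, jth4_add_one, div_neg, div_neg]
    ring
  unfold OmegaMat
  rw [hm, hp, hz, jth2_add_one, jth3_add_one]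
  ext i j
  fin_cases i <;> fin_cases j <;> simp [Matrix.mul_apply, Fin.sum_univ_two]
end
end

section
/- Let τ be in the upper half-plane and let z ∈ ℂ satisfy θ₁(2z|τ) ≠ 0 and θ₄(2z|τ) ≠ 0 (and assume θ₃(0|τ) ≠ 0 and θ₄(0|τ) ≠ 0). Then Ω(z + τ/2) = exp(−πi(2z + τ/2))·T₂·Ω(z), where T₂ = [[0,1],[1,0]]. -/
noncomputable section

open Complex

theorem thetaAB_add_tau (a b : ℝ) (z τ : ℂ) :
    thetaAB a b (z + τ) τ =
      Complex.exp (-((Real.pi : ℂ) * Complex.I * τ) - 2 * (Real.pi : ℂ) * Complex.I * (z + b)) *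
        thetaAB a b z τ := by
  unfold thetaAB
  rw [← (Equiv.addRight (1 : ℤ)).tsum_eq (fun k : ℤ =>
    Complex.exp ((Real.pi : ℂ) * Complex.I * τ * ((k : ℂ) + (a : ℂ)) ^ 2 +
      2 * (Real.pi : ℂ) * Complex.I * ((k : ℂ) + (a : ℂ)) * (z + (b : ℂ)))), ← tsum_mul_left]
  refine tsum_congr fun k => ?_
  rw [← Complex.exp_add]
  congr 1
  simp only [Equiv.coe_addRight]
  push_cast
  ring

theorem jth3_half (w τ : ℂ) :
    jth3 (w + τ) (2 * τ) =
      Complex.exp (-((Real.pi : ℂ) * Complex.I) * (w + τ/2)) * jth2 w (2 * τ) := by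
  unfold jth3 jth2 thetaAB
  rw [← tsum_mul_left]
  refine tsum_congr fun k => ?_
  rw [← Complex.exp_add]
  congr 1
  push_cast
  ring

theorem jth2_half (w τ : ℂ) :
    jth2 (w + τ) (2 * τ) =
      Complex.exp (-((Real.pi : ℂ) * Complex.I) * (w + τ/2)) * jth3 w (2 * τ) := by
  unfold jth3 jth2 thetaAB
  rw [← (Equiv.addRight (1 : ℤ)).tsum_eq (fun k : ℤ =>
    Complex.exp ((Real.pi : ℂ) * Complex.I * (2 * τ) * ((k : ℂ) + ((0 : ℝ) : ℂ)) ^ 2 +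
      2 * (Real.pi : ℂ) * Complex.I * ((k : ℂ) + ((0 : ℝ) : ℂ)) * (w + ((0 : ℝ) : ℂ)))),
    ← tsum_mul_left]
  refine tsum_congr fun k => ?_
  rw [← Complex.exp_add]
  congr 1
  simp only [Equiv.coe_addRight]
  push_cast
  ring

theorem exp_half_shift (w τ : ℂ) :
    Complex.exp (-((Real.pi : ℂ) * Complex.I * τ) -
        2 * (Real.pi : ℂ) * Complex.I * (w + ((1/2 : ℝ) : ℂ))) =
      -Complex.exp (-((Real.pi : ℂ) * Complex.I * τ) -
        2 * (Real.pi : ℂ) * Complex.I * (w + ((0 : ℝ) : ℂ))) := by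
  have h : -((Real.pi : ℂ) * Complex.I * τ) -
        2 * (Real.pi : ℂ) * Complex.I * (w + ((1/2 : ℝ) : ℂ)) =
      (-((Real.pi : ℂ) * Complex.I * τ) -
        2 * (Real.pi : ℂ) * Complex.I * (w + ((0 : ℝ) : ℂ))) - (Real.pi : ℂ) * Complex.I := by
    push_cast
    ring
  rw [h, Complex.exp_sub, Complex.exp_pi_mul_I]
  ring

/-- `Ω(z + τ/2) = exp(−πi(2z + τ/2))·T₂·Ω(z)` with `T₂ = [[0,1],[1,0]]`. -/
theorem OmegaMat_tau_half_translation (τ z : ℂ) (hτ : 0 < τ.im)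
    (h1 : jth1 (2*z) τ ≠ 0) (h1' : jth4 (2*z) τ ≠ 0) (h3 : jth3 0 τ ≠ 0) (h4 : jth4 0 τ ≠ 0) :
    OmegaMat τ (z + τ/2) =
      Complex.exp (-((Real.pi : ℂ) * Complex.I) * (2*z + τ/2)) •
        (!![(0 : ℂ), 1; 1, 0] * OmegaMat τ z) := by
  have e : 2 * (z + τ/2) = 2 * z + τ := by ring
  have r3 : jth3 (2*z + τ) τ / jth1 (2*z + τ) τ = -(jth3 (2*z) τ / jth1 (2*z) τ) := by
    unfold jth3 jth1 at *
    rw [thetaAB_add_tau, thetaAB_add_tau, exp_half_shift]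
    have hE := Complex.exp_ne_zero (-((Real.pi : ℂ) * Complex.I * τ) -
        2 * (Real.pi : ℂ) * Complex.I * (2*z + ((0 : ℝ) : ℂ)))
    have h1n := neg_ne_zero.mp h1
    field_simp
  have r4 : jth4 (2*z + τ) τ / jth1 (2*z + τ) τ = jth4 (2*z) τ / jth1 (2*z) τ := by
    unfold jth4 jth1 at *
    rw [thetaAB_add_tau, thetaAB_add_tau, exp_half_shift]
    have hE := Complex.exp_ne_zero (-((Real.pi : ℂ) * Complex.I * τ) -
        2 * (Real.pi : ℂ) * Complex.I * (2*z + ((0 : ℝ) : ℂ)))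
    have h1n := neg_ne_zero.mp h1
    field_simp
  have pp : psiPlus τ (z + τ/2) = psiMinus τ z := by
    unfold psiPlus psiMinus
    rw [e, r3, r4]
    ring
  have pm : psiMinus τ (z + τ/2) = psiPlus τ z := by
    unfold psiPlus psiMinus
    rw [e, r3, r4]
    ring
  unfold OmegaMat
  rw [pp, pm, e, jth3_half, jth2_half]
  ext i j
  fin_cases i <;> fin_cases j <;> simp [Matrix.mul_apply, Fin.sum_univ_two] <;> ring
end
end

section
/- Let 𝕂 = ℝ. The fixed subring A^{D₂} = {a ∈ A : σ₁(a) = a and σ₂(a) = a} is isomorphic, as an ℝ-algebra, to ℝ[x,y]/(y² − (x−r₁)(x−r₂)(x−r₃)). -/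
noncomputable section

open MvPolynomial Matrix

variable (𝕂 : Type) [Field 𝕂]

/-- The ideal of `𝕂[λ₁,λ₂,λ₃]` generated by `λ₁²−λ₂²+r₁−r₂` and `λ₂²−λ₃²+r₂−r₃`. -/
def Icurve (r₁ r₂ r₃ : 𝕂) : Ideal (MvPolynomial (Fin 3) 𝕂) :=
  Ideal.span {X 0 ^ 2 - X 1 ^ 2 + C r₁ - C r₂, X 1 ^ 2 - X 2 ^ 2 + C r₂ - C r₃}

/-- The coordinate ring `A = 𝕂[λ₁,λ₂,λ₃]/I`. -/
abbrev Acurve (r₁ r₂ r₃ : 𝕂) : Type := MvPolynomial (Fin 3) 𝕂 ⧸ Icurve 𝕂 r₁ r₂ r₃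

/-- The images λᵢ of the variables in `A`. -/
def lam (r₁ r₂ r₃ : 𝕂) (i : Fin 3) : Acurve 𝕂 r₁ r₂ r₃ := Ideal.Quotient.mk _ (X i)

/-- Sign-change 𝕂-algebra endomorphism of `A`, for a choice of signs `ε` with `ε i ^ 2 = 1`. -/
def sigmaA (r₁ r₂ r₃ : 𝕂) (ε : Fin 3 → 𝕂) (hε : ∀ i, ε i ^ 2 = 1) :
    Acurve 𝕂 r₁ r₂ r₃ →ₐ[𝕂] Acurve 𝕂 r₁ r₂ r₃ :=
  Ideal.Quotient.liftₐ (Icurve 𝕂 r₁ r₂ r₃)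
    ((Ideal.Quotient.mkₐ 𝕂 (Icurve 𝕂 r₁ r₂ r₃)).comp (aeval fun i => C (ε i) * X i))
    (by
      intro a ha
      have key : ∀ p ∈ ({X 0 ^ 2 - X 1 ^ 2 + C r₁ - C r₂,
          X 1 ^ 2 - X 2 ^ 2 + C r₂ - C r₃} : Set (MvPolynomial (Fin 3) 𝕂)),
          aeval (fun i => C (ε i) * X i) p = p := by
        intro p hp
        rcases hp with rfl | rfl <;>
          simp [map_sub, map_add, map_pow, aeval_X, algebraMap_eq, mul_pow, ← C_pow, hε]
      have hmem : aeval (fun i => C (ε i) * X i) a ∈ Icurve 𝕂 r₁ r₂ r₃ := by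
        have hle : Icurve 𝕂 r₁ r₂ r₃ ≤
            Ideal.comap (aeval (fun i => C (ε i) * X i) :
              MvPolynomial (Fin 3) 𝕂 →ₐ[𝕂] MvPolynomial (Fin 3) 𝕂) (Icurve 𝕂 r₁ r₂ r₃) := by
          simp only [Icurve]
          rw [Ideal.span_le]
          intro p hp
          rw [SetLike.mem_coe, Ideal.mem_comap, key p hp]
          exact Ideal.subset_span hp
        exact hle ha
      rw [AlgHom.comp_apply, Ideal.Quotient.mkₐ_eq_mk, Ideal.Quotient.eq_zero_iff_mem]
      exact hmem)

/-- The automorphism `σ₁ : (λ₁,λ₂,λ₃) ↦ (λ₁,−λ₂,−λ₃)` of `A`. -/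
def σA1 (r₁ r₂ r₃ : 𝕂) : Acurve 𝕂 r₁ r₂ r₃ →ₐ[𝕂] Acurve 𝕂 r₁ r₂ r₃ :=
  sigmaA 𝕂 r₁ r₂ r₃ ![1, -1, -1] (by intro i; fin_cases i <;> norm_num)

/-- The automorphism `σ₂ : (λ₁,λ₂,λ₃) ↦ (−λ₁,−λ₂,λ₃)` of `A`. -/
def σA2 (r₁ r₂ r₃ : 𝕂) : Acurve 𝕂 r₁ r₂ r₃ →ₐ[𝕂] Acurve 𝕂 r₁ r₂ r₃ :=
  sigmaA 𝕂 r₁ r₂ r₃ ![-1, -1, 1] (by intro i; fin_cases i <;> norm_num)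

/-- The ideal `(y² − (x−r₁)(x−r₂)(x−r₃)) ⊆ 𝕂[x,y]`. -/
def Bideal (r₁ r₂ r₃ : 𝕂) : Ideal (MvPolynomial (Fin 2) 𝕂) :=
  Ideal.span {X 1 ^ 2 - (X 0 - C r₁) * (X 0 - C r₂) * (X 0 - C r₃)}

/-- The ring `B = 𝕂[x,y]/(y² − (x−r₁)(x−r₂)(x−r₃))`. -/
abbrev Bring (r₁ r₂ r₃ : 𝕂) : Type := MvPolynomial (Fin 2) 𝕂 ⧸ Bideal 𝕂 r₁ r₂ r₃

/-- The fixed subring `A^{D₂} = {a ∈ A : σ₁(a) = a, σ₂(a) = a}` as a subalgebra of `A`. -/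
def fixedA (r₁ r₂ r₃ : 𝕂) : Subalgebra 𝕂 (Acurve 𝕂 r₁ r₂ r₃) :=
  AlgHom.equalizer (σA1 𝕂 r₁ r₂ r₃) (AlgHom.id 𝕂 _) ⊓
    AlgHom.equalizer (σA2 𝕂 r₁ r₂ r₃) (AlgHom.id 𝕂 _)

section Helpers

variable (r₁ r₂ r₃ : ℝ)

lemma lam01 : lam ℝ r₁ r₂ r₃ 1 ^ 2 =
    lam ℝ r₁ r₂ r₃ 0 ^ 2 + algebraMap ℝ _ r₁ - algebraMap ℝ _ r₂ := by
  have h : (Ideal.Quotient.mk (Icurve ℝ r₁ r₂ r₃)) (X 0 ^ 2 - X 1 ^ 2 + C r₁ - C r₂) = 0 :=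
    Ideal.Quotient.eq_zero_iff_mem.2 (Ideal.subset_span (by simp))
  simp only [map_sub, map_add, map_pow] at h
  change lam ℝ r₁ r₂ r₃ 0 ^ 2 - lam ℝ r₁ r₂ r₃ 1 ^ 2 + algebraMap ℝ _ r₁ - algebraMap ℝ _ r₂ = 0 at h
  linear_combination -h

lemma lam12 : lam ℝ r₁ r₂ r₃ 2 ^ 2 =
    lam ℝ r₁ r₂ r₃ 0 ^ 2 + algebraMap ℝ _ r₁ - algebraMap ℝ _ r₃ := by
  have h : (Ideal.Quotient.mk (Icurve ℝ r₁ r₂ r₃)) (X 1 ^ 2 - X 2 ^ 2 + C r₂ - C r₃) = 0 :=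
    Ideal.Quotient.eq_zero_iff_mem.2 (Ideal.subset_span (by simp))
  simp only [map_sub, map_add, map_pow] at h
  change lam ℝ r₁ r₂ r₃ 1 ^ 2 - lam ℝ r₁ r₂ r₃ 2 ^ 2 + algebraMap ℝ _ r₂ - algebraMap ℝ _ r₃ = 0 at h
  linear_combination lam01 r₁ r₂ r₃ - h

/-- the element `x` of `A` -/
def xA : Acurve ℝ r₁ r₂ r₃ := lam ℝ r₁ r₂ r₃ 0 ^ 2 + algebraMap ℝ _ r₁

/-- the element `y` of `A` -/
def yA : Acurve ℝ r₁ r₂ r₃ := lam ℝ r₁ r₂ r₃ 0 * lam ℝ r₁ r₂ r₃ 1 * lam ℝ r₁ r₂ r₃ 2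

lemma lam_sq (i : Fin 3) : lam ℝ r₁ r₂ r₃ i ^ 2 =
    xA r₁ r₂ r₃ - algebraMap ℝ _ ((![r₁, r₂, r₃] : Fin 3 → ℝ) i) := by
  fin_cases i
  · simp [xA]
  · simpa [xA] using lam01 r₁ r₂ r₃
  · simpa [xA] using lam12 r₁ r₂ r₃

/-- the map `B → A` -/
def phi : Bring ℝ r₁ r₂ r₃ →ₐ[ℝ] Acurve ℝ r₁ r₂ r₃ :=
  Ideal.Quotient.liftₐ (Bideal ℝ r₁ r₂ r₃) (aeval ![xA r₁ r₂ r₃, yA r₁ r₂ r₃]) (by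
    intro a ha
    have hle : Bideal ℝ r₁ r₂ r₃ ≤ RingHom.ker
        (aeval ![xA r₁ r₂ r₃, yA r₁ r₂ r₃] :
          MvPolynomial (Fin 2) ℝ →ₐ[ℝ] Acurve ℝ r₁ r₂ r₃) := by
      rw [Bideal, Ideal.span_le, Set.singleton_subset_iff]
      rw [SetLike.mem_coe, RingHom.mem_ker]
      have h0 := lam_sq r₁ r₂ r₃ 0
      have h1 := lam_sq r₁ r₂ r₃ 1
      have h2 := lam_sq r₁ r₂ r₃ 2
      simp only [Matrix.cons_val] at h0 h1 h2
      simp only [map_sub, map_mul, map_pow, aeval_X, aeval_C, Matrix.cons_val]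
      rw [← h0, ← h1, ← h2, yA]
      ring
    exact hle ha)

/-- the generators of `B` -/
def xB : Bring ℝ r₁ r₂ r₃ := Ideal.Quotient.mk _ (X 0)

/-- the generators of `B` -/
def yB : Bring ℝ r₁ r₂ r₃ := Ideal.Quotient.mk _ (X 1)

lemma phi_xB : phi r₁ r₂ r₃ (xB r₁ r₂ r₃) = xA r₁ r₂ r₃ := by
  change aeval ![xA r₁ r₂ r₃, yA r₁ r₂ r₃] (X 0 : MvPolynomial (Fin 2) ℝ) = _
  simp

lemma phi_yB : phi r₁ r₂ r₃ (yB r₁ r₂ r₃) = yA r₁ r₂ r₃ := by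
  change aeval ![xA r₁ r₂ r₃, yA r₁ r₂ r₃] (X 1 : MvPolynomial (Fin 2) ℝ) = _
  simp

lemma yB_sq : yB r₁ r₂ r₃ ^ 2 = (xB r₁ r₂ r₃ - algebraMap ℝ _ r₁) *
    (xB r₁ r₂ r₃ - algebraMap ℝ _ r₂) * (xB r₁ r₂ r₃ - algebraMap ℝ _ r₃) := by
  have h : (Ideal.Quotient.mk (Bideal ℝ r₁ r₂ r₃))
      (X 1 ^ 2 - (X 0 - C r₁) * (X 0 - C r₂) * (X 0 - C r₃)) = 0 :=
    Ideal.Quotient.eq_zero_iff_mem.2 (Ideal.subset_span (by simp))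
  simp only [map_sub, map_mul, map_pow] at h
  exact sub_eq_zero.1 h

lemma B_normal (b : Bring ℝ r₁ r₂ r₃) : ∃ p q : Polynomial ℝ,
    b = Polynomial.aeval (xB r₁ r₂ r₃) p +
      Polynomial.aeval (xB r₁ r₂ r₃) q * yB r₁ r₂ r₃ := by
  obtain ⟨f, rfl⟩ := Ideal.Quotient.mk_surjective b
  induction f using MvPolynomial.induction_on with
  | C c =>
    refine ⟨Polynomial.C c, 0, ?_⟩
    simp only [Polynomial.aeval_C, map_zero, zero_mul, add_zero]
    rfl
  | add f g hf hg =>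
    obtain ⟨p, q, h⟩ := hf
    obtain ⟨p', q', h'⟩ := hg
    refine ⟨p + p', q + q', ?_⟩
    rw [map_add, h, h', map_add, map_add]
    ring
  | mul_X f i hf =>
    obtain ⟨p, q, h⟩ := hf
    rw [map_mul, h]
    fin_cases i
    · refine ⟨p * Polynomial.X, q * Polynomial.X, ?_⟩
      change _ * xB r₁ r₂ r₃ = _
      simp only [map_mul, Polynomial.aeval_X]
      ring
    · refine ⟨q * ((Polynomial.X - Polynomial.C r₁) * (Polynomial.X - Polynomial.C r₂) *
        (Polynomial.X - Polynomial.C r₃)), p, ?_⟩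
      change _ * yB r₁ r₂ r₃ = _
      simp only [map_mul, map_sub, Polynomial.aeval_X, Polynomial.aeval_C]
      rw [← yB_sq]
      ring

/-- evaluation at a point of the curve -/
def evA (l : Fin 3 → ℝ) (h1 : l 0 ^ 2 - l 1 ^ 2 + r₁ - r₂ = 0)
    (h2 : l 1 ^ 2 - l 2 ^ 2 + r₂ - r₃ = 0) : Acurve ℝ r₁ r₂ r₃ →ₐ[ℝ] ℝ :=
  Ideal.Quotient.liftₐ (Icurve ℝ r₁ r₂ r₃) (aeval l) (by
    intro a ha
    have hle : Icurve ℝ r₁ r₂ r₃ ≤ RingHom.ker (aeval l : MvPolynomial (Fin 3) ℝ →ₐ[ℝ] ℝ) := by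
      rw [Icurve, Ideal.span_le]
      rintro p (rfl | rfl)
      · simpa [RingHom.mem_ker] using h1
      · simpa [RingHom.mem_ker] using h2
    exact hle ha)

lemma evA_lam (l : Fin 3 → ℝ) (h1 : l 0 ^ 2 - l 1 ^ 2 + r₁ - r₂ = 0)
    (h2 : l 1 ^ 2 - l 2 ^ 2 + r₂ - r₃ = 0) (i : Fin 3) :
    evA r₁ r₂ r₃ l h1 h2 (lam ℝ r₁ r₂ r₃ i) = l i := by
  change aeval l (X i : MvPolynomial (Fin 3) ℝ) = _
  simp

lemma phi_inj : Function.Injective (phi r₁ r₂ r₃) := by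
  rw [injective_iff_map_eq_zero]
  intro b hb
  obtain ⟨p, q, rfl⟩ := B_normal r₁ r₂ r₃ b
  rw [map_add, map_mul, ← Polynomial.aeval_algHom_apply, ← Polynomial.aeval_algHom_apply,
    phi_xB, phi_yB] at hb
  have key : ∀ (l : Fin 3 → ℝ) (t : ℝ), l 0 ^ 2 = t - r₁ → l 1 ^ 2 = t - r₂ → l 2 ^ 2 = t - r₃ →
      p.eval t + q.eval t * (l 0 * l 1 * l 2) = 0 := by
    intro l t h0 h1 h2
    have hh1 : l 0 ^ 2 - l 1 ^ 2 + r₁ - r₂ = 0 := by rw [h0, h1]; ring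
    have hh2 : l 1 ^ 2 - l 2 ^ 2 + r₂ - r₃ = 0 := by rw [h1, h2]; ring
    have h := congrArg (evA r₁ r₂ r₃ l hh1 hh2) hb
    rw [map_add, map_mul, ← Polynomial.aeval_algHom_apply, ← Polynomial.aeval_algHom_apply,
      map_zero] at h
    have hx : evA r₁ r₂ r₃ l hh1 hh2 (xA r₁ r₂ r₃) = t := by
      rw [xA, map_add, map_pow, evA_lam, h0, AlgHom.commutes]
      simp
    have hy : evA r₁ r₂ r₃ l hh1 hh2 (yA r₁ r₂ r₃) = l 0 * l 1 * l 2 := by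
      simp only [yA, map_mul, evA_lam]
    rw [hx, hy] at h
    simpa [Polynomial.aeval_def] using h
  have key2 : ∀ t ∈ Set.Ioi (max r₁ (max r₂ r₃)), p.eval t = 0 ∧ q.eval t = 0 := by
    intro t ht
    rw [Set.mem_Ioi, max_lt_iff, max_lt_iff] at ht
    obtain ⟨a1, a2, a3⟩ := ht
    have b1 : 0 < t - r₁ := by linarith
    have b2 : 0 < t - r₂ := by linarith
    have b3 : 0 < t - r₃ := by linarith
    have e1 := key ![√(t - r₁), √(t - r₂), √(t - r₃)] t (by simp [Real.sq_sqrt b1.le])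
      (by simp [Real.sq_sqrt b2.le]) (by simp [Real.sq_sqrt b3.le])
    have e2 := key ![√(t - r₁), √(t - r₂), -√(t - r₃)] t (by simp [Real.sq_sqrt b1.le])
      (by simp [Real.sq_sqrt b2.le]) (by simp [Real.sq_sqrt b3.le])
    simp only [Matrix.cons_val] at e1 e2
    have hpos : 0 < √(t - r₁) * √(t - r₂) * √(t - r₃) := by positivity
    have e3 : p.eval t = 0 := by linarith
    refine ⟨e3, ?_⟩
    rw [e3, zero_add] at e1
    exact (mul_eq_zero.1 e1).resolve_right hpos.ne'
  have hp : p = 0 := Polynomial.eq_zero_of_infinite_isRoot p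
    ((Set.Ioi_infinite _).mono fun t ht => (key2 t ht).1)
  have hq : q = 0 := Polynomial.eq_zero_of_infinite_isRoot q
    ((Set.Ioi_infinite _).mono fun t ht => (key2 t ht).2)
  simp [hp, hq]

lemma sigmaA_lam (ε : Fin 3 → ℝ) (hε : ∀ i, ε i ^ 2 = 1) (i : Fin 3) :
    sigmaA ℝ r₁ r₂ r₃ ε hε (lam ℝ r₁ r₂ r₃ i) = algebraMap ℝ _ (ε i) * lam ℝ r₁ r₂ r₃ i := by
  change Ideal.Quotient.mk _ (aeval (fun i => C (ε i) * X i) (X i : MvPolynomial (Fin 3) ℝ)) = _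
  rw [aeval_X, map_mul]
  rfl

lemma s1_0 : σA1 ℝ r₁ r₂ r₃ (lam ℝ r₁ r₂ r₃ 0) = lam ℝ r₁ r₂ r₃ 0 := by
  rw [σA1, sigmaA_lam]; simp
lemma s1_1 : σA1 ℝ r₁ r₂ r₃ (lam ℝ r₁ r₂ r₃ 1) = - lam ℝ r₁ r₂ r₃ 1 := by
  rw [σA1, sigmaA_lam]; simp; ring
lemma s1_2 : σA1 ℝ r₁ r₂ r₃ (lam ℝ r₁ r₂ r₃ 2) = - lam ℝ r₁ r₂ r₃ 2 := by
  rw [σA1, sigmaA_lam]; simp; ring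
lemma s2_0 : σA2 ℝ r₁ r₂ r₃ (lam ℝ r₁ r₂ r₃ 0) = - lam ℝ r₁ r₂ r₃ 0 := by
  rw [σA2, sigmaA_lam]; simp; ring
lemma s2_1 : σA2 ℝ r₁ r₂ r₃ (lam ℝ r₁ r₂ r₃ 1) = - lam ℝ r₁ r₂ r₃ 1 := by
  rw [σA2, sigmaA_lam]; simp; ring
lemma s2_2 : σA2 ℝ r₁ r₂ r₃ (lam ℝ r₁ r₂ r₃ 2) = lam ℝ r₁ r₂ r₃ 2 := by
  rw [σA2, sigmaA_lam]; simp

lemma lam_sq_mem (i : Fin 3) : lam ℝ r₁ r₂ r₃ i ^ 2 ∈ (phi r₁ r₂ r₃).range := by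
  rw [lam_sq]
  exact sub_mem ⟨_, phi_xB r₁ r₂ r₃⟩ (Subalgebra.algebraMap_mem _ _)

lemma range_le : (phi r₁ r₂ r₃).range ≤ fixedA ℝ r₁ r₂ r₃ := by
  rintro _ ⟨b, rfl⟩
  obtain ⟨p, q, rfl⟩ := B_normal r₁ r₂ r₃ b
  change phi r₁ r₂ r₃ _ ∈ _
  rw [map_add, map_mul, ← Polynomial.aeval_algHom_apply, ← Polynomial.aeval_algHom_apply,
    phi_xB, phi_yB]
  have hx : xA r₁ r₂ r₃ ∈ fixedA ℝ r₁ r₂ r₃ := by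
    constructor
    · change σA1 ℝ r₁ r₂ r₃ _ = _
      simp [xA, s1_0]
    · change σA2 ℝ r₁ r₂ r₃ _ = _
      simp [xA, s2_0]; ring
  have hy : yA r₁ r₂ r₃ ∈ fixedA ℝ r₁ r₂ r₃ := by
    constructor
    · change σA1 ℝ r₁ r₂ r₃ _ = _
      simp [yA, s1_0, s1_1, s1_2]; ring
    · change σA2 ℝ r₁ r₂ r₃ _ = _
      simp [yA, s2_0, s2_1, s2_2]; ring
  have hP : ∀ p : Polynomial ℝ, Polynomial.aeval (xA r₁ r₂ r₃) p ∈ fixedA ℝ r₁ r₂ r₃ :=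
    fun p => Algebra.adjoin_le (Set.singleton_subset_iff.2 hx)
      (Polynomial.aeval_mem_adjoin_singleton ℝ _)
  exact add_mem (hP p) (mul_mem (hP q) hy)

/-- four times the averaging operator -/
def avg (a : Acurve ℝ r₁ r₂ r₃) : Acurve ℝ r₁ r₂ r₃ :=
  a + σA1 ℝ r₁ r₂ r₃ a + σA2 ℝ r₁ r₂ r₃ a + σA1 ℝ r₁ r₂ r₃ (σA2 ℝ r₁ r₂ r₃ a)

lemma avg_mon (i j k : ℕ) : avg r₁ r₂ r₃ (lam ℝ r₁ r₂ r₃ 0 ^ i * lam ℝ r₁ r₂ r₃ 1 ^ j *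
    lam ℝ r₁ r₂ r₃ 2 ^ k) ∈ (phi r₁ r₂ r₃).range := by
  have hy : yA r₁ r₂ r₃ ∈ (phi r₁ r₂ r₃).range := ⟨_, phi_yB r₁ r₂ r₃⟩
  have m0 := lam_sq_mem r₁ r₂ r₃ 0
  have m1 := lam_sq_mem r₁ r₂ r₃ 1
  have m2 := lam_sq_mem r₁ r₂ r₃ 2
  have hmem : ∀ a b c : ℕ, (lam ℝ r₁ r₂ r₃ 0 ^ 2) ^ a * (lam ℝ r₁ r₂ r₃ 1 ^ 2) ^ b *
      (lam ℝ r₁ r₂ r₃ 2 ^ 2) ^ c ∈ (phi r₁ r₂ r₃).range := fun a b c =>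
    mul_mem (mul_mem (pow_mem m0 a) (pow_mem m1 b)) (pow_mem m2 c)
  simp only [avg, map_mul, map_pow, map_neg, s1_0, s1_1, s1_2, s2_0, s2_1, s2_2, neg_neg]
  have ev : ∀ z : Acurve ℝ r₁ r₂ r₃, (-z) ^ 2 = z ^ 2 := fun z => by ring
  obtain ⟨a, rfl | rfl⟩ := Nat.even_or_odd' i <;> obtain ⟨b, rfl | rfl⟩ := Nat.even_or_odd' j <;>
    obtain ⟨c, rfl | rfl⟩ := Nat.even_or_odd' k <;>
    simp only [pow_succ _ (2 * _), pow_mul, ev]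
  · have h := hmem a b c
    exact add_mem (add_mem (add_mem h h) h) h
  all_goals first
    | (convert zero_mem (phi r₁ r₂ r₃).range using 1; ring1)
    | (convert mul_mem (hmem a b c) (mul_mem hy (ofNat_mem (phi r₁ r₂ r₃).range 4)) using 1
       simp only [yA]; ring)

lemma avg_mem (a : Acurve ℝ r₁ r₂ r₃) : avg r₁ r₂ r₃ a ∈ (phi r₁ r₂ r₃).range := by
  obtain ⟨f, rfl⟩ := Ideal.Quotient.mk_surjective a
  induction f using MvPolynomial.induction_on' with
  | monomial u c =>
    have h : Ideal.Quotient.mk (Icurve ℝ r₁ r₂ r₃) (monomial u c) =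
        algebraMap ℝ _ c * (lam ℝ r₁ r₂ r₃ 0 ^ u 0 * lam ℝ r₁ r₂ r₃ 1 ^ u 1 * lam ℝ r₁ r₂ r₃ 2 ^ u 2) := by
      rw [monomial_eq, Finsupp.prod_fintype _ _ (by simp), Fin.prod_univ_three]
      simp only [map_mul, map_pow]
      rfl
    have h2 : avg r₁ r₂ r₃ (Ideal.Quotient.mk (Icurve ℝ r₁ r₂ r₃) (monomial u c)) =
        algebraMap ℝ _ c * avg r₁ r₂ r₃ (lam ℝ r₁ r₂ r₃ 0 ^ u 0 * lam ℝ r₁ r₂ r₃ 1 ^ u 1 *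
          lam ℝ r₁ r₂ r₃ 2 ^ u 2) := by
      rw [h]
      simp only [avg, map_mul, AlgHom.commutes]
      ring
    rw [h2]
    exact mul_mem (Subalgebra.algebraMap_mem _ c) (avg_mon r₁ r₂ r₃ _ _ _)
  | add f g hf hg =>
    have h2 := add_mem hf hg
    convert h2 using 1
    simp only [avg, map_add]
    ring

lemma range_eq : (phi r₁ r₂ r₃).range = fixedA ℝ r₁ r₂ r₃ := by
  refine le_antisymm (range_le r₁ r₂ r₃) ?_
  rintro a ⟨h1, h2⟩
  replace h1 : σA1 ℝ r₁ r₂ r₃ a = a := h1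
  replace h2 : σA2 ℝ r₁ r₂ r₃ a = a := h2
  have h := Subalgebra.smul_mem _ (avg_mem r₁ r₂ r₃ a) (1 / 4 : ℝ)
  have e : (1 / 4 : ℝ) • avg r₁ r₂ r₃ a = a := by
    rw [avg, h2, h1]
    module
  rwa [e] at h

end Helpers

/-- For 𝕂 = ℝ, the fixed subring `A^{D₂}` is isomorphic as an ℝ-algebra to
`ℝ[x,y]/(y² − (x−r₁)(x−r₂)(x−r₃))`. -/
theorem fixedA_iso_Bring (r₁ r₂ r₃ : ℝ) (h12 : r₁ ≠ r₂) (h13 : r₁ ≠ r₃) (h23 : r₂ ≠ r₃) :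
    Nonempty ((fixedA ℝ r₁ r₂ r₃) ≃ₐ[ℝ] (Bring ℝ r₁ r₂ r₃)) := by
  exact ⟨((AlgEquiv.ofInjective (phi r₁ r₂ r₃) (phi_inj r₁ r₂ r₃)).trans
    (Subalgebra.equivOfEq _ _ (range_eq r₁ r₂ r₃))).symm⟩
end
end

section
/- In the polynomial ring ℝ[λ₁,λ₂,λ₃], the subring of elements fixed by both automorphisms τ₁: (λ₁,λ₂,λ₃) ↦ (λ₁,−λ₂,−λ₃) and τ₂: (λ₁,λ₂,λ₃) ↦ (−λ₁,−λ₂,λ₃) equals the ℝ-subalgebra generated by λ₁², λ₂², λ₃² and λ₁λ₂λ₃. -/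
noncomputable section

open MvPolynomial

/-- The ℝ-algebra endomorphism of `ℝ[λ₁,λ₂,λ₃]` sending `λᵢ ↦ ε i · λᵢ`. -/
def tauPoly (ε : Fin 3 → ℝ) : MvPolynomial (Fin 3) ℝ →ₐ[ℝ] MvPolynomial (Fin 3) ℝ :=
  aeval fun i => C (ε i) * X i

/-- `τ₁ : (λ₁,λ₂,λ₃) ↦ (λ₁,−λ₂,−λ₃)`. -/
def tau1 : MvPolynomial (Fin 3) ℝ →ₐ[ℝ] MvPolynomial (Fin 3) ℝ := tauPoly ![1, -1, -1]

/-- `τ₂ : (λ₁,λ₂,λ₃) ↦ (−λ₁,−λ₂,λ₃)`. -/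
def tau2 : MvPolynomial (Fin 3) ℝ →ₐ[ℝ] MvPolynomial (Fin 3) ℝ := tauPoly ![-1, -1, 1]

/-- The sum of a polynomial over the Klein four-group lies in the adjoin. -/
theorem reynolds_mem (p : MvPolynomial (Fin 3) ℝ) :
    p + tau1 p + tau2 p + tau1 (tau2 p) ∈
      Algebra.adjoin ℝ ({X 0 ^ 2, X 1 ^ 2, X 2 ^ 2, X 0 * X 1 * X 2} :
        Set (MvPolynomial (Fin 3) ℝ)) := by
  induction p using MvPolynomial.induction_on' with
  | add p q hp hq =>
    have h := add_mem hp hq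
    simp only [map_add]
    convert h using 1
    ring
  | monomial s r =>
    set A := Algebra.adjoin ℝ ({X 0 ^ 2, X 1 ^ 2, X 2 ^ 2, X 0 * X 1 * X 2} :
        Set (MvPolynomial (Fin 3) ℝ)) with hA
    have h0 : (X 0 ^ 2 : MvPolynomial (Fin 3) ℝ) ∈ A := Algebra.subset_adjoin (by simp)
    have h1 : (X 1 ^ 2 : MvPolynomial (Fin 3) ℝ) ∈ A := Algebra.subset_adjoin (by simp)
    have h2 : (X 2 ^ 2 : MvPolynomial (Fin 3) ℝ) ∈ A := Algebra.subset_adjoin (by simp)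
    have h3 : (X 0 * X 1 * X 2 : MvPolynomial (Fin 3) ℝ) ∈ A :=
      Algebra.subset_adjoin (by simp)
    have hm : (monomial s r : MvPolynomial (Fin 3) ℝ) =
        C r * (X 0 ^ s 0 * X 1 ^ s 1 * X 2 ^ s 2) := by
      rw [monomial_eq, Finsupp.prod_fintype _ _ (by simp), Fin.prod_univ_three]
    have hC : ∀ (r : ℝ), (C r : MvPolynomial (Fin 3) ℝ) ∈ A := fun r => A.algebraMap_mem r
    have e1 : ∀ r a b c, tau1 (C r * (X 0 ^ a * X 1 ^ b * X 2 ^ c)) =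
        C r * (X 0 ^ a * (-X 1) ^ b * (-X 2) ^ c) := by
      intro r a b c
      simp [tau1, tauPoly]
    have e2 : ∀ r a b c, tau2 (C r * (X 0 ^ a * X 1 ^ b * X 2 ^ c)) =
        C r * ((-X 0) ^ a * (-X 1) ^ b * X 2 ^ c) := by
      intro r a b c
      simp [tau2, tauPoly]
    have e3 : ∀ r a b c, tau1 (C r * ((-X 0) ^ a * (-X 1) ^ b * X 2 ^ c)) =
        C r * ((-X 0) ^ a * X 1 ^ b * (-X 2) ^ c) := by
      intro r a b c
      simp [tau1, tauPoly]
    rw [hm, e2, e3, e1]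
    generalize s 0 = a
    generalize s 1 = b
    generalize s 2 = c
    have key : ∀ i j k : ℕ, (C (4 * r) * ((X 0 ^ 2) ^ i * (X 1 ^ 2) ^ j * (X 2 ^ 2) ^ k) :
        MvPolynomial (Fin 3) ℝ) ∈ A := fun i j k =>
      mul_mem (hC _) (mul_mem (mul_mem (pow_mem h0 _) (pow_mem h1 _)) (pow_mem h2 _))
    have h4 : (C (4 * r) : MvPolynomial (Fin 3) ℝ) = 4 * C r := by
      rw [C_mul]; rfl
    obtain ⟨i, rfl | rfl⟩ := Nat.even_or_odd' a <;>
    obtain ⟨j, rfl | rfl⟩ := Nat.even_or_odd' b <;>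
    obtain ⟨k, rfl | rfl⟩ := Nat.even_or_odd' c
    case inl.inl.inl =>
      convert key i j k using 1
      simp only [pow_mul, neg_sq, h4]
      ring
    case inr.inr.inr =>
      convert mul_mem (key i j k) h3 using 1
      simp only [pow_add, pow_one, pow_mul, neg_sq, h4]
      ring
    all_goals
      convert zero_mem A using 1
      simp only [pow_add, pow_one, pow_mul, neg_sq]
      ring

/-- the subring of `ℝ[λ₁,λ₂,λ₃]` fixed by both `τ₁` and `τ₂` equals the
ℝ-subalgebra generated by `λ₁², λ₂², λ₃²` and `λ₁λ₂λ₃`. -/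
theorem fixed_polynomial_ring_eq_adjoin :
    AlgHom.equalizer tau1 (AlgHom.id ℝ (MvPolynomial (Fin 3) ℝ)) ⊓
      AlgHom.equalizer tau2 (AlgHom.id ℝ (MvPolynomial (Fin 3) ℝ)) =
    Algebra.adjoin ℝ {X 0 ^ 2, X 1 ^ 2, X 2 ^ 2, X 0 * X 1 * X 2} := by
  apply le_antisymm
  · rintro p ⟨h1, h2⟩
    have h1 : tau1 p = p := h1
    have h2 : tau2 p = p := h2
    have h := reynolds_mem p
    rw [h2, h1] at h
    have h' := Subalgebra.smul_mem _ h (1 / 4 : ℝ)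
    convert h' using 1
    rw [show p + p + p + p = (4 : ℝ) • p by rw [show (4 : ℝ) = 1 + 1 + 1 + 1 by norm_num]; simp only [add_smul, one_smul], smul_smul]
    norm_num
  · rw [Algebra.adjoin_le_iff]
    rintro p (rfl | rfl | rfl | rfl) <;> constructor <;>
      simp [tau1, tau2, tauPoly]
end
end
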